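/- Consider a sequence of M-layer models indexed by M on a fixed finite simple graph G = (V,E), with parameters satisfying p_ℓ(M) M^{α_ℓ} → c_ℓ > 0 for each link ℓ and q_i(M) M^{β_i} → d_i > 0 for each node i, where α_ℓ ≥ 0 and β_i ≥ 0. For each link ℓ = (i,j) define λ_ℓ = 0 if α_ℓ + β_i + β_j > 1, λ_ℓ = c_ℓ d_i d_j if α_ℓ + β_i + β_j = 1, and λ_ℓ = +∞ if α_ℓ + β_i + β_j < 1. Assume that for every node k, if at least two links ℓ = (k,i) incident to k satisfy α_ℓ + β_k + β_i = 1, then β_k < 1. Then the link multiplicities {W_ℓ : ℓ ∈ E} are asymptotically independent with Poisson limits: for every (w_ℓ)_{ℓ∈E} ∈ ℕ^E, lim_{M→∞} P[W_ℓ = w_ℓ for all ℓ ∈ E] = ∏_{ℓ∈E} π(w_ℓ; λ_ℓ), where π(w;λ) = λ^w e^{−λ}/w! for λ ∈ (0,∞), π(w;0) = 1 if w = 0 and 0 otherwise, and π(w;∞) = 0 for all w ∈ ℕ. -/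

import Mathlib

open MeasureTheory Filter Finset

open scoped Classical

/-- Bernoulli measure on `Bool` with success probability `p`. -/
noncomputable def bern (p : ℝ) : Measure Bool :=
  ENNReal.ofReal p • Measure.dirac true + ENNReal.ofReal (1 - p) • Measure.dirac false

/-- The `M`-layer model: mutually independent Bernoulli variables `Y_{m,ℓ}` (link
thinning, probability `p ℓ`) and `Z_{m,i}` (node activation, probability `q i`). -/
noncomputable def netμ (V : Type) [Fintype V] (M : ℕ) (p : V × V → ℝ) (q : V → ℝ) :
    Measure (((Fin M × (V × V)) ⊕ (Fin M × V)) → Bool) :=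
  Measure.pi fun k =>
    bern (Sum.elim (fun a : Fin M × (V × V) => p a.2) (fun a : Fin M × V => q a.2) k)

/-- Link `ℓ = (i,j)` exists on layer `m`: `Y_{m,ℓ} = Z_{m,i} = Z_{m,j} = 1`. -/
def exOn {V : Type} {M : ℕ} (m : Fin M) (ℓ : V × V)
    (ω : ((Fin M × (V × V)) ⊕ (Fin M × V)) → Bool) : Prop :=
  ω (Sum.inl (m, ℓ)) = true ∧ ω (Sum.inr (m, ℓ.1)) = true ∧ ω (Sum.inr (m, ℓ.2)) = true

/-- `W_ℓ`: the number of layers on which link `ℓ` exists. -/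
noncomputable def Wnum {V : Type} {M : ℕ} (ℓ : V × V)
    (ω : ((Fin M × (V × V)) ⊕ (Fin M × V)) → Bool) : ℕ :=
  (Finset.univ.filter fun m : Fin M => exOn m ℓ ω).card

/-! The layers are independent and identically distributed, so the probability generating function
of the multiplicities is `E ∏ z_ℓ ^ W_ℓ = (E ∏ z_ℓ ^ 1_{A_ℓ}) ^ M`, where `A_ℓ` is the event that
`ℓ` exists on a given layer. Expanding `∏ (1 + (z_ℓ - 1) 1_{A_ℓ})`, only single links contribute to
`M (E ∏ z_ℓ ^ 1_{A_ℓ} - 1)` in the limit, because `M P(A_ℓ ∩ A_ℓ') → 0` for `ℓ ≠ ℓ'`: if both links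
are critical and share the node `k`, then `P(A_ℓ ∩ A_ℓ') = P(A_ℓ) P(A_ℓ') / q_k` is of order
`M ^ (β_k - 2)`. The limit of the generating function is thus `exp (∑ λ_ℓ (z_ℓ - 1))`, that of a
product of Poisson laws, and Lévy's continuity theorem concludes, `ℕ ^ E` being closed and discrete
in Euclidean space. If some `λ_ℓ` is infinite, Markov's inequality for `2 ^ (-W_ℓ)` shows that
`W_ℓ` escapes to infinity. -/

open ProbabilityTheory Topology

open scoped NNReal

section Law

variable {ι : Type*}

/-- The inclusion of `ℕ^ι` into Euclidean space, through which laws of families of counts acquire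
characteristic functions. -/
def countEmbedding (k : ι → ℕ) : EuclideanSpace ℝ ι := WithLp.toLp 2 fun l => (k l : ℝ)

theorem isClosedEmbedding_countEmbedding :
    IsClosedEmbedding (countEmbedding : (ι → ℕ) → EuclideanSpace ℝ ι) :=
  (PiLp.homeomorph 2 fun _ : ι => ℝ).symm.isClosedEmbedding.comp
    (.piMap fun _ : ι => Nat.isClosedEmbedding_coe_real)

variable [Fintype ι]

theorem charFun_map_countEmbedding (μ : Measure (ι → ℕ)) (t : EuclideanSpace ℝ ι) :
    charFun (μ.map countEmbedding) t = ∫ k, ∏ l, Complex.exp (t l * Complex.I) ^ k l ∂μ := by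
  rw [charFun_apply, integral_map Measurable.of_discrete.aemeasurable (by fun_prop)]
  refine integral_congr_ae (.of_forall fun k => ?_)
  simp only [countEmbedding, ← Complex.exp_nat_mul, ← Complex.exp_sum, PiLp.inner_apply,
    Complex.ofReal_sum, Finset.sum_mul]
  congr 1
  refine Finset.sum_congr rfl fun l _ => ?_
  simp only [RCLike.inner_apply, map_natCast, Complex.ofReal_mul, Complex.ofReal_natCast]
  ring

theorem tendsto_measureReal_singleton_of_tendsto_charFun {μ : ℕ → Measure (ι → ℕ)}
    {μ₀ : Measure (ι → ℕ)} [∀ n, IsProbabilityMeasure (μ n)] [IsProbabilityMeasure μ₀]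
    (h : ∀ t : ι → ℝ, Tendsto (fun n => ∫ k, ∏ l, Complex.exp (t l * Complex.I) ^ k l ∂μ n) atTop
      (𝓝 (∫ k, ∏ l, Complex.exp (t l * Complex.I) ^ k l ∂μ₀))) (w : ι → ℕ) :
    Tendsto (fun n => (μ n).real {w}) atTop (𝓝 (μ₀.real {w})) := by
  let P : ℕ → ProbabilityMeasure (ι → ℕ) := fun n => ⟨μ n, inferInstance⟩
  let P₀ : ProbabilityMeasure (ι → ℕ) := ⟨μ₀, inferInstance⟩
  have hmeas (ν : Measure (ι → ℕ)) : AEMeasurable countEmbedding ν :=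
    Measurable.of_discrete.aemeasurable
  have hmap : Tendsto (fun n => (P n).map (hmeas _)) atTop (𝓝 (P₀.map (hmeas _))) :=
    ProbabilityMeasure.tendsto_of_tendsto_charFun fun t => by
      change Tendsto (fun n => charFun ((μ n).map countEmbedding) t) atTop
        (𝓝 (charFun (μ₀.map countEmbedding) t))
      simpa only [charFun_map_countEmbedding] using h t
  have hweak : Tendsto P atTop (𝓝 P₀) := by
    rw [ProbabilityMeasure.tendsto_nhds_iff_toFiniteMeasure_tendsto_nhds] at hmap ⊢
    exact (FiniteMeasure.Topology.IsClosedEmbedding.isEmbedding_map_finiteMeasure _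
      isClosedEmbedding_countEmbedding).tendsto_nhds_iff.2 hmap
  have := ProbabilityMeasure.tendsto_measure_of_null_frontier_of_tendsto' hweak (E := {w})
    (by simp)
  exact (ENNReal.tendsto_toReal (measure_ne_top _ _)).comp this

theorem integral_prod_pow_pi_poissonMeasure (r : ι → ℝ≥0) (t : ι → ℝ) :
    ∫ k : ι → ℕ, ∏ l, Complex.exp (t l * Complex.I) ^ k l
        ∂(Measure.pi fun l => poissonMeasure (r l)) =
      Complex.exp (∑ l, r l * (Complex.exp (t l * Complex.I) - 1)) := by
  rw [integral_fintype_prod_eq_prod (fun l k => Complex.exp (t l * Complex.I) ^ k), Complex.exp_sum]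
  refine Finset.prod_congr rfl fun l _ => ?_
  rw [← charFun_map_cast_poissonMeasure, charFun_apply_real,
    integral_map Measurable.of_discrete.aemeasurable (by fun_prop)]
  refine integral_congr_ae (.of_forall fun k => ?_)
  simp only [← Complex.exp_nat_mul]
  push_cast
  ring_nf

end Law

section Occurrences

variable {X ι κ : Type*} [Fintype κ]

/-- The vector counting, for each event `A l`, the layers `m : κ` on which `A l` occurs. -/
noncomputable def occurrences (A : ι → Set X) (η : κ → X) (l : ι) : ℕ := #{m | η m ∈ A l}

variable [MeasurableSpace X]

theorem measurable_occurrences_apply {A : ι → Set X} {l : ι} (hA : MeasurableSet (A l)) :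
    Measurable fun η : κ → X => occurrences A η l := by
  simp only [occurrences, Finset.card_filter]
  exact Finset.measurable_sum _ fun m _ =>
    Measurable.ite (measurable_pi_apply m hA) measurable_const measurable_const

theorem measurable_occurrences {A : ι → Set X} (hA : ∀ l, MeasurableSet (A l)) :
    Measurable (occurrences A : (κ → X) → ι → ℕ) :=
  measurable_pi_lambda _ fun l => measurable_occurrences_apply (hA l)

theorem integral_prod_pow_occurrences [Fintype ι] {𝕜 : Type*} [RCLike 𝕜] (μ : Measure X)
    [SigmaFinite μ] (A : ι → Set X) (z : ι → 𝕜) :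
    ∫ η : κ → X, ∏ l, z l ^ occurrences A η l ∂(Measure.pi fun _ => μ) =
      (∫ x, ∏ l, (if x ∈ A l then z l else 1) ∂μ) ^ Fintype.card κ := by
  rw [← integral_fintype_prod_eq_pow]
  refine integral_congr_ae (.of_forall fun η => ?_)
  simp only
  rw [Finset.prod_comm]
  refine Finset.prod_congr rfl fun l _ => ?_
  rw [occurrences, ← Finset.prod_const, Finset.prod_filter]

theorem integral_prod_ite_mem [Fintype ι] {𝕜 : Type*} [RCLike 𝕜] (μ : Measure X)
    [IsFiniteMeasure μ] {A : ι → Set X} (hA : ∀ l, MeasurableSet (A l)) (z : ι → 𝕜) :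
    ∫ x, ∏ l, (if x ∈ A l then z l else 1) ∂μ =
      ∑ S : Finset ι, μ.real (⋂ l ∈ S, A l) • ∏ l ∈ S, (z l - 1) := by
  have hmeas : ∀ S : Finset ι, MeasurableSet (⋂ l ∈ S, A l) := fun S =>
    S.measurableSet_biInter fun l _ => hA l
  have hexpand : ∀ x, ∏ l, (if x ∈ A l then z l else 1) =
      ∑ S : Finset ι, (⋂ l ∈ S, A l).indicator (fun _ => ∏ l ∈ S, (z l - 1)) x := fun x => by
    have hone : ∀ l, (if x ∈ A l then z l else 1) = 1 + if x ∈ A l then z l - 1 else 0 :=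
      fun l => by split_ifs <;> ring
    simp only [hone, Finset.prod_one_add, Finset.powerset_univ, Finset.prod_ite_zero,
      Set.indicator_apply, Set.mem_iInter]
    congr!
  simp only [hexpand]
  rw [integral_finsetSum _ fun S _ => (integrable_const _).indicator (hmeas S)]
  exact Finset.sum_congr rfl fun S _ => integral_indicator_const _ (hmeas S)

theorem integral_pow_occurrences (μ : Measure X) [IsProbabilityMeasure μ] {A : ι → Set X} {l : ι}
    (hA : MeasurableSet (A l)) (z : ℝ) :
    ∫ η : κ → X, z ^ occurrences A η l ∂(Measure.pi fun _ => μ) =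
      (1 + μ.real (A l) * (z - 1)) ^ Fintype.card κ := by
  have hpow (x : X) : (if x ∈ A l then z else 1) = 1 + (A l).indicator (fun _ => z - 1) x := by
    by_cases hx : x ∈ A l <;> simp [hx]
  have hprod := integral_prod_pow_occurrences (κ := κ) μ (fun _ : Unit => A l) fun _ => z
  simp only [Finset.univ_unique, Finset.prod_singleton, hpow] at hprod
  rwa [integral_add (integrable_const 1) ((integrable_const _).indicator hA),
    integral_indicator_const _ hA, integral_const, probReal_univ, one_smul, smul_eq_mul] at hprod

theorem measureReal_occurrences_le_le (μ : Measure X) [IsProbabilityMeasure μ] {A : ι → Set X}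
    {l : ι} (hA : MeasurableSet (A l)) (k : ℕ) :
    (Measure.pi fun _ : κ => μ).real {η | occurrences A η l ≤ k} ≤
      2 ^ k * Real.exp (-(Fintype.card κ * μ.real (A l) / 2)) := by
  set P := (Measure.pi fun _ : κ => μ)
  have hint : Integrable (fun η : κ → X => (1 / 2 : ℝ) ^ occurrences A η l) P :=
    .of_bound (Measurable.of_discrete.comp (measurable_occurrences_apply hA)).aestronglyMeasurable
      1 (.of_forall fun η => by
        rw [Real.norm_of_nonneg (by positivity)]
        exact pow_le_one₀ (by norm_num) (by norm_num))
  have hmarkov : (1 / 2 : ℝ) ^ k * P.real {η | occurrences A η l ≤ k} ≤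
      ∫ η : κ → X, (1 / 2 : ℝ) ^ occurrences A η l ∂P := by
    refine le_trans ?_ (mul_meas_ge_le_integral_of_nonneg (.of_forall fun η => by positivity)
      hint ((1 / 2) ^ k))
    gcongr
    · finiteness
    · exact fun hη => pow_le_pow_of_le_one (by norm_num) (by norm_num) hη
  calc P.real {η | occurrences A η l ≤ k}
      = 2 ^ k * ((1 / 2 : ℝ) ^ k * P.real {η | occurrences A η l ≤ k}) := by
        rw [← mul_assoc, ← mul_pow]; norm_num
    _ ≤ 2 ^ k * (1 - μ.real (A l) / 2) ^ Fintype.card κ := by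
        rw [integral_pow_occurrences μ hA,
          show 1 + μ.real (A l) * (1 / 2 - 1) = 1 - μ.real (A l) / 2 by ring] at hmarkov
        gcongr
    _ ≤ 2 ^ k * Real.exp (-(μ.real (A l) / 2)) ^ Fintype.card κ := by
        have : μ.real (A l) ≤ 1 := measureReal_le_one
        gcongr
        · linarith
        · exact Real.one_sub_le_exp_neg _
    _ = 2 ^ k * Real.exp (-(Fintype.card κ * μ.real (A l) / 2)) := by
        rw [← Real.exp_nat_mul]; ring_nf

end Occurrences

section RareEvents

variable {X : ℕ → Type*} [∀ n, MeasurableSpace (X n)] {ι : Type*}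
  {μ : ∀ n, Measure (X n)} {A : ∀ n, ι → Set (X n)}

theorem tendsto_mul_measureReal_biInter [Fintype ι] [∀ n, IsFiniteMeasure (μ n)]
    {r : ι → ℝ} (hr : ∀ l, Tendsto (fun n : ℕ => n * (μ n).real (A n l)) atTop (𝓝 (r l)))
    (hpair : Pairwise fun l l' =>
      Tendsto (fun n : ℕ => n * (μ n).real (A n l ∩ A n l')) atTop (𝓝 0))
    {S : Finset ι} (hS : S.Nonempty) :
    Tendsto (fun n : ℕ => n * (μ n).real (⋂ l ∈ S, A n l)) atTop
      (𝓝 (∑ l, if S = {l} then r l else 0)) := by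
  obtain ⟨l, rfl⟩ | ⟨l, hl, l', hl', hne⟩ := hS.exists_eq_singleton_or_nontrivial
  · simpa using hr l
  · have hzero : ∑ l, (if S = {l} then r l else 0) = 0 := Finset.sum_eq_zero fun k _ =>
      if_neg fun hk => hne (by simp_all)
    rw [hzero]
    refine squeeze_zero (fun n => by positivity) (fun n => ?_) (hpair hne)
    gcongr
    · finiteness
    · exact Set.subset_inter (Set.biInter_subset_of_mem hl) (Set.biInter_subset_of_mem hl')

variable [∀ n, IsProbabilityMeasure (μ n)]

theorem tendsto_measureReal_occurrences_eq_zero {l : ι} (hA : ∀ n, MeasurableSet (A n l))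
    (hl : Tendsto (fun n : ℕ => n * (μ n).real (A n l)) atTop atTop) (w : ι → ℕ) :
    Tendsto (fun n => (Measure.pi fun _ : Fin n => μ n).real {η | occurrences (A n) η = w}) atTop
      (𝓝 0) := by
  have hexp : Tendsto (fun n : ℕ => 2 ^ w l * Real.exp (-(n * (μ n).real (A n l) / 2))) atTop
      (𝓝 0) := by
    simpa using (Real.tendsto_exp_neg_atTop_nhds_zero.comp
      (hl.atTop_div_const two_pos)).const_mul (2 ^ w l)
  refine squeeze_zero (fun n => measureReal_nonneg) (fun n => ?_) hexp
  have hsub : {η : Fin n → X n | occurrences (A n) η = w} ⊆ {η | occurrences (A n) η l ≤ w l} :=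
    fun η hη => (congrFun hη l).le
  simpa using (measureReal_mono hsub (by finiteness)).trans
    (measureReal_occurrences_le_le (κ := Fin n) (μ n) (hA n) (w l))

variable [Fintype ι]

theorem tendsto_mul_integral_prod_ite_mem_sub_one (hA : ∀ n l, MeasurableSet (A n l))
    {r : ι → ℝ} (hr : ∀ l, Tendsto (fun n : ℕ => n * (μ n).real (A n l)) atTop (𝓝 (r l)))
    (hpair : Pairwise fun l l' =>
      Tendsto (fun n : ℕ => n * (μ n).real (A n l ∩ A n l')) atTop (𝓝 0)) (z : ι → ℂ) :
    Tendsto (fun n : ℕ => n * (∫ x, ∏ l, (if x ∈ A n l then z l else 1) ∂μ n - 1)) atTop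
      (𝓝 (∑ l, r l * (z l - 1))) := by
  have hexpand : ∀ n : ℕ, n * (∫ x, ∏ l, (if x ∈ A n l then z l else 1) ∂μ n - 1) =
      ∑ S : Finset ι with S.Nonempty,
        ((n * (μ n).real (⋂ l ∈ S, A n l) : ℝ) : ℂ) * ∏ l ∈ S, (z l - 1) := fun n => by
    have hempty : ({S | ¬S.Nonempty} : Finset (Finset ι)) = {∅} := by ext; simp
    rw [integral_prod_ite_mem _ (hA n), ← Finset.sum_filter_add_sum_filter_not _ Finset.Nonempty,
      hempty]
    simp [Finset.mul_sum, mul_assoc]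
  have hlim : ∑ S : Finset ι with S.Nonempty,
      ((∑ l, if S = {l} then r l else 0 : ℝ) : ℂ) * ∏ l ∈ S, (z l - 1) =
        ∑ l, r l * (z l - 1) := by
    simp only [Complex.ofReal_sum, Finset.sum_mul]
    rw [Finset.sum_comm]
    refine Finset.sum_congr rfl fun l _ => ?_
    rw [Finset.sum_eq_single {l}]
    · simp
    · intro S _ hS
      simp [hS]
    · simp
  simp only [hexpand, ← hlim]
  exact tendsto_finsetSum _ fun S hS => .mul_const _ <|
    (Complex.continuous_ofReal.tendsto _).comp
      (tendsto_mul_measureReal_biInter hr hpair (Finset.mem_filter.1 hS).2)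

theorem tendsto_measureReal_occurrences_eq_poisson (hA : ∀ n l, MeasurableSet (A n l))
    {r : ι → ℝ≥0}
    (hr : ∀ l, Tendsto (fun n : ℕ => n * (μ n).real (A n l)) atTop (𝓝 (r l)))
    (hpair : Pairwise fun l l' =>
      Tendsto (fun n : ℕ => n * (μ n).real (A n l ∩ A n l')) atTop (𝓝 0)) (w : ι → ℕ) :
    Tendsto (fun n => (Measure.pi fun _ : Fin n => μ n).real {η | occurrences (A n) η = w}) atTop
      (𝓝 (∏ l, (poissonMeasure (r l)).real {w l})) := by
  let law : ℕ → Measure (ι → ℕ) := fun n =>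
    (Measure.pi fun _ : Fin n => μ n).map (occurrences (A n))
  have hmeas : ∀ n, Measurable (occurrences (A n) : (Fin n → X n) → ι → ℕ) := fun n =>
    measurable_occurrences (hA n)
  have : ∀ n, IsProbabilityMeasure (law n) := fun n =>
    Measure.isProbabilityMeasure_map (hmeas n).aemeasurable
  have hpgf : ∀ t : ι → ℝ,
      Tendsto (fun n => ∫ k, ∏ l, Complex.exp (t l * Complex.I) ^ k l ∂law n) atTop
        (𝓝 (∫ k, ∏ l, Complex.exp (t l * Complex.I) ^ k l
          ∂(Measure.pi fun l => poissonMeasure (r l)))) := fun t => by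
    simp only [law, integral_map (hmeas _).aemeasurable
      Measurable.of_discrete.aestronglyMeasurable, integral_prod_pow_occurrences,
      Fintype.card_fin, integral_prod_pow_pi_poissonMeasure]
    simpa using Complex.tendsto_one_add_pow_exp_of_tendsto
      (tendsto_mul_integral_prod_ite_mem_sub_one hA hr hpair fun l => Complex.exp (t l * Complex.I))
  have hpoint := tendsto_measureReal_singleton_of_tendsto_charFun hpgf w
  have hpi : (Measure.pi fun l => poissonMeasure (r l)).real {w} =
      ∏ l, (poissonMeasure (r l)).real {w l} := by
    simp [measureReal_def, ENNReal.toReal_prod]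
  rw [hpi] at hpoint
  refine hpoint.congr fun n => ?_
  exact map_measureReal_apply (hmeas n) (measurableSet_singleton w)

end RareEvents

section Scaling

variable {u : ℕ → ℝ} {a e : ℝ}

theorem tendsto_mul_rpow_atTop (ha : 0 < a) (he : e < 1)
    (hu : Tendsto (fun n : ℕ => u n * (n : ℝ) ^ e) atTop (𝓝 a)) :
    Tendsto (fun n : ℕ => n * u n) atTop atTop := by
  have hpow : Tendsto (fun n : ℕ => (n : ℝ) ^ (1 - e)) atTop atTop :=
    (tendsto_rpow_atTop (sub_pos.2 he)).comp tendsto_natCast_atTop_atTop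
  refine (hu.pos_mul_atTop ha hpow).congr' ?_
  filter_upwards [eventually_gt_atTop 0] with n hn
  rw [mul_assoc, ← Real.rpow_add (Nat.cast_pos.2 hn), add_sub_cancel, Real.rpow_one, mul_comm]

theorem tendsto_mul_rpow_zero (he : 1 < e)
    (hu : Tendsto (fun n : ℕ => u n * (n : ℝ) ^ e) atTop (𝓝 a)) :
    Tendsto (fun n : ℕ => n * u n) atTop (𝓝 0) := by
  have hpow : Tendsto (fun n : ℕ => (n : ℝ) ^ (-(e - 1))) atTop (𝓝 0) :=
    (tendsto_rpow_neg_atTop (sub_pos.2 he)).comp tendsto_natCast_atTop_atTop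
  rw [← mul_zero a]
  refine (hu.mul hpow).congr' ?_
  filter_upwards [eventually_gt_atTop 0] with n hn
  rw [mul_assoc, ← Real.rpow_add (Nat.cast_pos.2 hn), show e + -(e - 1) = 1 by ring,
    Real.rpow_one, mul_comm]

/-- The limit of `n * u n` when `u n` is asymptotic to `a * n ^ (-e)` with `1 ≤ e`: the parameter
`λ_ℓ` of the limiting Poisson law, for a link that does not have `λ_ℓ = ∞`. -/
noncomputable def limitRate (e a : ℝ) : ℝ≥0 := if 1 < e then 0 else a.toNNReal

theorem limitRate_of_one_lt (he : 1 < e) : limitRate e a = 0 := if_pos he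

theorem tendsto_mul_limitRate (ha : 0 ≤ a) (he : 1 ≤ e)
    (hu : Tendsto (fun n : ℕ => u n * (n : ℝ) ^ e) atTop (𝓝 a)) :
    Tendsto (fun n : ℕ => n * u n) atTop (𝓝 (limitRate e a)) := by
  obtain rfl | he := he.eq_or_lt
  · simpa [limitRate, ha, mul_comm] using hu
  · simpa [limitRate_of_one_lt he] using tendsto_mul_rpow_zero he hu

theorem poissonMeasure_limitRate_real_singleton (ha : 0 ≤ a) (he : 1 ≤ e) (w : ℕ) :
    (poissonMeasure (limitRate e a)).real {w} =
      if 1 < e then (if w = 0 then 1 else 0)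
      else if e = 1 then a ^ w * Real.exp (-a) / w.factorial else 0 := by
  rw [poissonMeasure_real_singleton]
  obtain rfl | he := he.eq_or_lt
  · simp [limitRate, ha, mul_comm]
  · obtain rfl | hw := eq_or_ne w 0 <;> simp [limitRate_of_one_lt he, *]

end Scaling

section BernoulliProduct

variable {κ : Type*}

instance isFiniteMeasure_bern (p : ℝ) : IsFiniteMeasure (bern p) :=
  ⟨by simp [bern]⟩

theorem isProbabilityMeasure_bern {p : ℝ} (hp : p ∈ Set.Icc 0 1) :
    IsProbabilityMeasure (bern p) :=
  ⟨by simp [bern, ← ENNReal.ofReal_add hp.1 (sub_nonneg.2 hp.2)]⟩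

theorem bern_real_true {p : ℝ} (hp : 0 ≤ p) : (bern p).real {true} = p := by
  simp [bern, measureReal_def, hp]

/-- The law of independent Bernoulli variables with success probabilities `f k`: one layer of the
model, for a suitable index type. -/
noncomputable def bernPi [Fintype κ] (f : κ → ℝ) : Measure (κ → Bool) :=
  Measure.pi fun k => bern (f k)

/-- The event that all the variables with index in `K` are equal to `1`. -/
def allTrue (K : Finset κ) : Set (κ → Bool) := Set.pi K fun _ => {true}

theorem isProbabilityMeasure_bernPi [Fintype κ] {f : κ → ℝ} (hf : ∀ k, f k ∈ Set.Icc 0 1) :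
    IsProbabilityMeasure (bernPi f) := by
  have := fun k => isProbabilityMeasure_bern (hf k)
  unfold bernPi; infer_instance

theorem bernPi_real_allTrue [Fintype κ] {f : κ → ℝ} (hf : ∀ k, f k ∈ Set.Icc 0 1) (K : Finset κ) :
    (bernPi f).real (allTrue K) = ∏ k ∈ K, f k := by
  have := fun k => isProbabilityMeasure_bern (hf k)
  rw [measureReal_def, bernPi, allTrue, Measure.pi_pi_finset, ENNReal.toReal_prod]
  exact Finset.prod_congr rfl fun k _ => bern_real_true (hf k).1

variable [DecidableEq κ]

theorem allTrue_inter_allTrue (K K' : Finset κ) :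
    allTrue K ∩ allTrue K' = allTrue (K ∪ K') := by
  simp [allTrue, Set.union_pi]

theorem tendsto_mul_prod_union_zero {f : ℕ → κ → ℝ} {K K' : Finset κ} {a a' : ℝ}
    (hK : Tendsto (fun n : ℕ => n * ∏ k ∈ K, f n k) atTop (𝓝 a))
    (hK' : Tendsto (fun n : ℕ => n * ∏ k ∈ K', f n k) atTop (𝓝 a'))
    (hinter : Tendsto (fun n : ℕ => n * ∏ k ∈ K ∩ K', f n k) atTop atTop) :
    Tendsto (fun n : ℕ => n * ∏ k ∈ K ∪ K', f n k) atTop (𝓝 0) := by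
  refine ((hK.mul hK').div_atTop hinter).congr' ?_
  filter_upwards [hinter.eventually_ne_atTop 0] with n hn
  rw [div_eq_iff hn, mul_mul_mul_comm, ← Finset.prod_union_inter, mul_mul_mul_comm]

theorem tendsto_mul_bernPi_real_inter_zero [Fintype κ] {f : ℕ → κ → ℝ}
    (hf : ∀ n k, f n k ∈ Set.Icc 0 1) {K K' : Finset κ} {e e' a a' : ℝ} (he : 1 ≤ e) (he' : 1 ≤ e')
    (hK : Tendsto (fun n : ℕ => (∏ k ∈ K, f n k) * (n : ℝ) ^ e) atTop (𝓝 a))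
    (hK' : Tendsto (fun n : ℕ => (∏ k ∈ K', f n k) * (n : ℝ) ^ e') atTop (𝓝 a'))
    (hinter : e = 1 → e' = 1 → Tendsto (fun n : ℕ => n * ∏ k ∈ K ∩ K', f n k) atTop atTop) :
    Tendsto (fun n : ℕ => n * (bernPi (f n)).real (allTrue K ∩ allTrue K')) atTop (𝓝 0) := by
  have := fun n => isProbabilityMeasure_bernPi (hf n)
  have hbound {L : Finset κ} (hsub : allTrue K ∩ allTrue K' ⊆ allTrue L)
      (hL : Tendsto (fun n : ℕ => n * ∏ k ∈ L, f n k) atTop (𝓝 0)) :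
      Tendsto (fun n : ℕ => n * (bernPi (f n)).real (allTrue K ∩ allTrue K')) atTop (𝓝 0) := by
    refine squeeze_zero (fun n => by positivity) (fun n => ?_) hL
    rw [← bernPi_real_allTrue (hf n)]
    gcongr
    finiteness
  obtain rfl | he := he.eq_or_lt
  · obtain rfl | he' := he'.eq_or_lt
    · simp only [Real.rpow_one, mul_comm _ (Nat.cast _ : ℝ)] at hK hK'
      exact hbound (allTrue_inter_allTrue K K').subset
        (tendsto_mul_prod_union_zero hK hK' (hinter rfl rfl))
    · exact hbound Set.inter_subset_right (tendsto_mul_rpow_zero he' hK')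
  · exact hbound Set.inter_subset_left (tendsto_mul_rpow_zero he hK)

end BernoulliProduct

section Layers

variable {V : Type} {M : ℕ}

/-- The configuration of each layer, extracted from the joint configuration of all layers. -/
def layers (ω : ((Fin M × (V × V)) ⊕ (Fin M × V)) → Bool) (m : Fin M) : (V × V) ⊕ V → Bool :=
  ω ∘ Sum.map (Prod.mk m) (Prod.mk m)

theorem map_layers_netμ [Fintype V] (p : V × V → ℝ) (q : V → ℝ) :
    (netμ V M p q).map layers = Measure.pi fun _ => bernPi (Sum.elim p q) := by
  have (f : (V × V) ⊕ V → ℝ) : IsFiniteMeasure (bernPi f) := by unfold bernPi; infer_instance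
  refine Measure.ext_of_singleton fun η => ?_
  have hpre : layers ⁻¹' {η} =
      {Sum.elim (fun a : Fin M × (V × V) => η a.1 (.inl a.2)) fun a => η a.1 (.inr a.2)} := by
    ext ω
    simp [layers, funext_iff, forall_and]
  rw [Measure.map_apply .of_discrete (measurableSet_singleton η), hpre, netμ,
    Measure.pi_singleton, Measure.pi_singleton]
  simp [bernPi, Measure.pi_singleton, Fintype.prod_sum_type, Fintype.prod_prod_type,
    Finset.prod_mul_distrib]

variable [DecidableEq V]

/-- The variables `Y_ℓ`, `Z_i` and `Z_j` of one layer that decide whether `ℓ = (i,j)` exists. -/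
def linkCoords (ℓ : V × V) : Finset ((V × V) ⊕ V) := {.inl ℓ, .inr ℓ.1, .inr ℓ.2}

theorem exOn_iff_layers_mem_allTrue {m : Fin M} {ℓ : V × V}
    {ω : ((Fin M × (V × V)) ⊕ (Fin M × V)) → Bool} :
    exOn m ℓ ω ↔ layers ω m ∈ allTrue (linkCoords ℓ) := by
  simp [exOn, layers, allTrue, linkCoords]

theorem netμ_real_forall_Wnum_eq [Fintype V] (p : V × V → ℝ) (q : V → ℝ) (E : Finset (V × V))
    (w : V × V → ℕ) :
    (netμ V M p q).real {ω | ∀ ℓ ∈ E, Wnum ℓ ω = w ℓ} =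
      (Measure.pi fun _ : Fin M => bernPi (Sum.elim p q)).real
        {η | occurrences (fun ℓ : E => allTrue (linkCoords ℓ.1)) η = fun ℓ => w ℓ.1} := by
  rw [← map_layers_netμ, map_measureReal_apply .of_discrete .of_discrete]
  congr 1
  ext ω
  simp [Wnum, exOn_iff_layers_mem_allTrue, occurrences, funext_iff]

theorem linkCoords_inter_eq {ℓ ℓ' : V × V} (hne : ℓ ≠ ℓ') (hswap : (ℓ.2, ℓ.1) ≠ ℓ') :
    linkCoords ℓ ∩ linkCoords ℓ' = ∅ ∨ ∃ k, linkCoords ℓ ∩ linkCoords ℓ' = {.inr k} := by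
  obtain hempty | ⟨x | k, hx⟩ := (linkCoords ℓ ∩ linkCoords ℓ').eq_empty_or_nonempty
  · exact .inl hempty
  · have hx : x = ℓ ∧ x = ℓ' := by simpa [linkCoords] using hx
    exact absurd (hx.1.symm.trans hx.2) hne
  · refine .inr ⟨k, ?_⟩
    ext (y | y) <;> grind [linkCoords]

theorem inr_mem_linkCoords {k : V} {ℓ : V × V} :
    .inr k ∈ linkCoords ℓ ↔ ℓ.1 = k ∨ ℓ.2 = k := by
  simp [linkCoords, eq_comm]

variable {p : ℕ → V × V → ℝ} {q : ℕ → V → ℝ}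

theorem tendsto_prod_linkCoords_mul_rpow {ℓ : V × V} (hℓ : ℓ.1 ≠ ℓ.2) {a b b' c d d' : ℝ}
    (hp : Tendsto (fun M : ℕ => p M ℓ * (M : ℝ) ^ a) atTop (𝓝 c))
    (hq : Tendsto (fun M : ℕ => q M ℓ.1 * (M : ℝ) ^ b) atTop (𝓝 d))
    (hq' : Tendsto (fun M : ℕ => q M ℓ.2 * (M : ℝ) ^ b') atTop (𝓝 d')) :
    Tendsto (fun M : ℕ => (∏ k ∈ linkCoords ℓ, Sum.elim (p M) (q M) k) * (M : ℝ) ^ (a + b + b'))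
      atTop (𝓝 (c * d * d')) := by
  refine ((hp.mul hq).mul hq').congr' ?_
  filter_upwards [eventually_gt_atTop 0] with M hM
  have hM : (0 : ℝ) < M := Nat.cast_pos.2 hM
  simp only [linkCoords, Real.rpow_add hM, Finset.mem_insert, Finset.mem_singleton, reduceCtorEq,
    Sum.inr.injEq, hℓ, or_self, not_false_eq_true, Finset.prod_insert, Finset.prod_singleton,
    Sum.elim_inl, Sum.elim_inr]
  ring

theorem tendsto_mul_prod_linkCoords_inter_atTop {ℓ ℓ' : V × V} (hne : ℓ ≠ ℓ')
    (hswap : (ℓ.2, ℓ.1) ≠ ℓ')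
    (hq : ∀ k, (ℓ.1 = k ∨ ℓ.2 = k) → (ℓ'.1 = k ∨ ℓ'.2 = k) →
      Tendsto (fun M : ℕ => M * q M k) atTop atTop) :
    Tendsto (fun M : ℕ => M * ∏ k ∈ linkCoords ℓ ∩ linkCoords ℓ', Sum.elim (p M) (q M) k)
      atTop atTop := by
  obtain hempty | ⟨k, hk⟩ := linkCoords_inter_eq hne hswap
  · simpa [hempty] using tendsto_natCast_atTop_atTop (R := ℝ)
  · have hmem : .inr k ∈ linkCoords ℓ ∩ linkCoords ℓ' := by simp [hk]
    simp only [Finset.mem_inter, inr_mem_linkCoords] at hmem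
    simpa [hk] using hq k hmem.1 hmem.2

end Layers

/-- asymptotic independence with Poisson limits.  Under the scalings
`p_ℓ(M) ~ c_ℓ M^{−α_ℓ}`, `q_i(M) ~ d_i M^{−β_i}` and the regularity condition
(`β_k < 1` whenever at least two links incident to `k` have exponent sum `1`),
the joint distribution of the multiplicities `(W_ℓ)_{ℓ∈E}` converges to a product of
(possibly degenerate) Poisson distributions with parameters `λ_ℓ`. -/
theorem stmt11 {V : Type} [Fintype V] [DecidableEq V] (E : Finset (V × V))
    (hE1 : ∀ ℓ ∈ E, ℓ.1 ≠ ℓ.2) (hE2 : ∀ ℓ ∈ E, (ℓ.2, ℓ.1) ∉ E)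
    (p : ℕ → (V × V) → ℝ) (q : ℕ → V → ℝ)
    (hp : ∀ M ℓ, p M ℓ ∈ Set.Ioc (0 : ℝ) 1) (hq : ∀ M i, q M i ∈ Set.Ioc (0 : ℝ) 1)
    (α c : (V × V) → ℝ) (β d : V → ℝ)
    (hα : ∀ ℓ ∈ E, 0 ≤ α ℓ) (hβ : ∀ i, 0 ≤ β i)
    (hc : ∀ ℓ ∈ E, 0 < c ℓ) (hd : ∀ i, 0 < d i)
    (hplim : ∀ ℓ ∈ E, Tendsto (fun M : ℕ => p M ℓ * (M : ℝ) ^ (α ℓ)) atTop (nhds (c ℓ)))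
    (hqlim : ∀ i, Tendsto (fun M : ℕ => q M i * (M : ℝ) ^ (β i)) atTop (nhds (d i)))
    (hreg : ∀ k : V,
      2 ≤ (E.filter fun ℓ => (ℓ.1 = k ∨ ℓ.2 = k) ∧ α ℓ + β ℓ.1 + β ℓ.2 = 1).card →
      β k < 1)
    (w : (V × V) → ℕ) :
    Tendsto (fun M : ℕ =>
        ((netμ V M (p M) (q M)) {ω | ∀ ℓ ∈ E, Wnum ℓ ω = w ℓ}).toReal) atTop
      (nhds (∏ ℓ ∈ E,
        if 1 < α ℓ + β ℓ.1 + β ℓ.2 then (if w ℓ = 0 then (1 : ℝ) else 0)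
        else if α ℓ + β ℓ.1 + β ℓ.2 = 1 then
          (c ℓ * d ℓ.1 * d ℓ.2) ^ (w ℓ) * Real.exp (-(c ℓ * d ℓ.1 * d ℓ.2))
            / ((w ℓ).factorial : ℝ)
        else 0)) := by
  have hf (M : ℕ) : ∀ k, Sum.elim (p M) (q M) k ∈ Set.Icc 0 1 := Sum.forall.2
    ⟨fun ℓ => Set.Ioc_subset_Icc_self (hp M ℓ), fun i => Set.Ioc_subset_Icc_self (hq M i)⟩
  have := fun M => isProbabilityMeasure_bernPi (hf M)
  have hrate (ℓ : E) : 0 < c ℓ * d ℓ.1.1 * d ℓ.1.2 :=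
    mul_pos (mul_pos (hc ℓ ℓ.2) (hd _)) (hd _)
  have hscale (ℓ : E) := tendsto_prod_linkCoords_mul_rpow (hE1 ℓ ℓ.2) (hplim ℓ ℓ.2)
    (hqlim ℓ.1.1) (hqlim ℓ.1.2)
  simp only [← measureReal_def, netμ_real_forall_Wnum_eq, ← Finset.prod_coe_sort E]
  by_cases! hdense : ∃ ℓ : E, α ℓ + β ℓ.1.1 + β ℓ.1.2 < 1
  · obtain ⟨ℓ, hlt⟩ := hdense
    rw [Finset.prod_eq_zero (mem_univ ℓ) (by simp [hlt.ne, hlt.not_gt])]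
    refine tendsto_measureReal_occurrences_eq_zero (l := ℓ) (fun _ => .of_discrete) ?_ _
    simpa only [bernPi_real_allTrue (hf _)] using tendsto_mul_rpow_atTop (hrate ℓ) hlt (hscale ℓ)
  simp only [← poissonMeasure_limitRate_real_singleton (hrate _).le (hdense _)]
  refine tendsto_measureReal_occurrences_eq_poisson (fun _ _ => .of_discrete) (fun ℓ => ?_)
    (fun ℓ ℓ' hne => ?_) _
  · simpa only [bernPi_real_allTrue (hf _)] using
      tendsto_mul_limitRate (hrate ℓ).le (hdense ℓ) (hscale ℓ)
  · have hne := Subtype.coe_ne_coe.2 hne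
    refine tendsto_mul_bernPi_real_inter_zero hf (hdense ℓ) (hdense ℓ') (hscale ℓ) (hscale ℓ')
      fun hcrit hcrit' => tendsto_mul_prod_linkCoords_inter_atTop hne
        (fun h => hE2 ℓ ℓ.2 (h ▸ ℓ'.2)) fun k hk hk' => ?_
    have hβ : β k < 1 := hreg k (Finset.one_lt_card.2 ⟨ℓ, by simp [hk, hcrit], ℓ',
      by simp [hk', hcrit'], hne⟩)
    exact tendsto_mul_rpow_atTop (hd k) hβ (hqlim k)
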